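/- Fix integers n ≥ 1 and k ≥ 1. For every integer m ≥ 1 and every x ∈ Q_1^m(k), one has the exact formula T_S(w_k)(x) = 1 + k · Σ_{i=1}^{m−1} (2^{kn}/(2^{(k−1)n}+1))^i (the sum is empty when m = 1). -/

import Mathlib

open MeasureTheory Set ENNReal

noncomputable section

/-- The half-open axis-parallel cube with corner `a` and side length `l`. -/
def Cube (n : ℕ) (a : Fin n → ℝ) (l : ℝ) : Set (Fin n → ℝ) :=
  Set.univ.pi fun i => Set.Ico (a i) (a i + l)

/-- The uncentered Hardy–Littlewood maximal function over axis-parallel cubes: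
`Mg(x) = sup_{Q ∋ x} |Q|⁻¹ ∫_Q g`. -/
def MaxFn {n : ℕ} (g : (Fin n → ℝ) → ℝ≥0∞) (x : Fin n → ℝ) : ℝ≥0∞ :=
  ⨆ (a : Fin n → ℝ) (l : ℝ) (_ : 0 < l) (_ : x ∈ Cube n a l),
    (volume (Cube n a l))⁻¹ * ∫⁻ y in Cube n a l, g y

/-- The cube of the sparse family `S` with parameters `k, N`:
`[0, 2^{-N})^n` for `k = 0` and `[2^k, 2^k + 2^{-N})^n` for `k ≥ 1`. -/
def sCube (n k N : ℕ) : Set (Fin n → ℝ) :=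
  Cube n (fun _ => if k = 0 then 0 else (2:ℝ)^k) ((2:ℝ)^(-(N:ℤ)))

/-- The sparse operator `T_S g = Σ_{Q ∈ S} (|Q|⁻¹ ∫_Q g) 1_Q`. -/
def TS {n : ℕ} (g : (Fin n → ℝ) → ℝ≥0∞) (x : Fin n → ℝ) : ℝ≥0∞ :=
  ∑' q : ℕ × ℕ,
    (sCube n q.1 q.2).indicator
      (fun _ => (volume (sCube n q.1 q.2))⁻¹ * ∫⁻ y in sCube n q.1 q.2, g y) x

/-- The `j`-th digit (for `j ≥ 1`) of `t ∈ [0,1)` in base `2^k`, using the expansion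
which is not eventually constant `2^k - 1`. -/
def digit (k j : ℕ) (t : ℝ) : ℤ := ⌊t * 2^(k*j)⌋ % 2^k

/-- `Ω_m(k) ⊆ [0,1)^n`: the points all of whose coordinates have base-`2^k` digits
in `{0, …, 2^{k-1}-1}` for `1 ≤ j ≤ m-1`, with `m`-th digit equal to `2^{k-1}`. -/
def Omega (n k m : ℕ) : Set (Fin n → ℝ) :=
  {x | (∀ i, x i ∈ Set.Ico (0:ℝ) 1) ∧
    ∀ i, (∀ j, 1 ≤ j → j < m → digit k j (x i) < 2^(k-1)) ∧
      digit k m (x i) = 2^(k-1)}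

/-- The weight `w_k = Σ_{m ≥ 1} (2^{kn}/(2^{(k-1)n}+1))^m 1_{Ω_m(k)}`. -/
def wk (n k : ℕ) : (Fin n → ℝ) → ℝ≥0∞ := fun x =>
  ∑' m : ℕ,
    (Omega n k (m+1)).indicator
      (fun _ => ((2:ℝ≥0∞)^(k*n) / ((2:ℝ≥0∞)^((k-1)*n) + 1))^(m+1)) x

/-- `Q_1^m(k) = [2^{-k(m-1)-1}, 2^{-k(m-1)-1} + 2^{-km})^n`. -/
def Q1 (n k m : ℕ) : Set (Fin n → ℝ) :=
  Cube n (fun _ => (2:ℝ)^(-(k*(m-1) : ℤ) - 1)) ((2:ℝ)^(-(k*m : ℤ)))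

/-- `Γ(k) = ⋃_{m ≥ 3} Q_1^m(k)`. -/
def Gamma (n k : ℕ) : Set (Fin n → ℝ) := ⋃ m : ℕ, Q1 n k (m+3)

/-- `A_k = 2^{(k-1)n} (2^{(k-1)n}+1)^2`. -/
def Ak (n k : ℕ) : ℝ≥0∞ := 2^((k-1)*n) * (2^((k-1)*n) + 1)^2

/-- The weight `w(x) = Σ_{k ≥ 3} A_k w_k(x - 2⃗^k) 1_{Γ(k)}(x - 2⃗^k)`. -/
def bigW (n : ℕ) : (Fin n → ℝ) → ℝ≥0∞ := fun x =>
  ∑' k : ℕ,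
    (Gamma n (k+3)).indicator (fun z => Ak n (k+3) * wk n (k+3) z)
      (fun i => x i - (2:ℝ)^(k+3))

/-- The test function `f(x) = Σ_{k ≥ 3} k^{-ε} A_k w_k(x - 2⃗^k)`. -/
def bigF (n : ℕ) (ε : ℝ) : (Fin n → ℝ) → ℝ≥0∞ := fun x =>
  ∑' k : ℕ,
    ((k+3 : ℝ≥0∞) ^ (-ε)) * Ak n (k+3) * wk n (k+3) (fun i => x i - (2:ℝ)^(k+3))

/-- `T` is bounded from `L^p(v)` to `L^p(u)` (for nonnegative functions, which are
required to be supported in `supp v`): there is a finite constant `C` with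
`‖Tf‖_{L^p(u)} ≤ C ‖f‖_{L^p(v)}` for all `f ∈ L^p(v)`. -/
def BddOn {n : ℕ} (T : ((Fin n → ℝ) → ℝ≥0∞) → (Fin n → ℝ) → ℝ≥0∞)
    (p : ℝ) (v u : (Fin n → ℝ) → ℝ≥0∞) : Prop :=
  ∃ C : ℝ≥0∞, C ≠ ∞ ∧ ∀ f : (Fin n → ℝ) → ℝ≥0∞, Measurable f →
    (∀ x, v x = 0 → f x = 0) → (∫⁻ x, f x ^ p * v x) < ∞ →
    ∫⁻ x, T f x ^ p * u x ≤ C ^ p * ∫⁻ x, f x ^ p * v x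

/-- The dual weight `u^{1-p'} 1_{supp u}`. -/
def dualW {n : ℕ} (u : (Fin n → ℝ) → ℝ≥0∞) (q : ℝ) : (Fin n → ℝ) → ℝ≥0∞ :=
  fun x => if u x = 0 then 0 else u x ^ (1 - q)

/-- One-dimensional version of `Omega`. -/
def EE (k m : ℕ) : Set ℝ :=
  {t | t ∈ Set.Ico (0:ℝ) 1 ∧ (∀ j, 1 ≤ j → j < m → digit k j t < 2^(k-1)) ∧
      digit k m t = 2^(k-1)}

lemma Omega_eq (n k m : ℕ) : Omega n k m = Set.univ.pi fun _ => EE k m := by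
  ext x
  simp only [Omega, EE, Set.mem_ofPred_eq, Set.mem_univ_pi]
  constructor
  · rintro ⟨h1, h2⟩ i
    exact ⟨h1 i, h2 i⟩
  · intro h
    exact ⟨fun i => (h i).1, fun i => (h i).2⟩

lemma digit_measurable (k j : ℕ) : Measurable (digit k j) := by
  unfold digit
  have h : Measurable (fun z : ℤ => z % 2^k) := measurable_of_countable _
  exact h.comp (Int.measurable_floor.comp (measurable_id.mul_const _))

lemma EE_measurable (k m : ℕ) : MeasurableSet (EE k m) := by
  have : EE k m = Set.Ico (0:ℝ) 1 ∩ ((⋂ j, ⋂ (_ : 1 ≤ j), ⋂ (_ : j < m),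
      digit k j ⁻¹' Set.Iio (2^(k-1))) ∩ digit k m ⁻¹' {2^(k-1)}) := by
    ext t
    simp [EE]
  rw [this]
  refine measurableSet_Ico.inter (MeasurableSet.inter ?_ ?_)
  · refine MeasurableSet.iInter fun j => MeasurableSet.iInter fun _ => MeasurableSet.iInter fun _ => ?_
    exact digit_measurable k j (MeasurableSet.of_discrete)
  · exact digit_measurable k m (MeasurableSet.of_discrete)

lemma vol_fract (b : ℝ) (hb : 0 < b) (M : ℕ) (B : Set ℝ) (hB : MeasurableSet B)
    (hB1 : B ⊆ Set.Ico 0 1) :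
    volume {t : ℝ | t ∈ Set.Ico 0 (M / b) ∧ Int.fract (b * t) ∈ B}
      = M * (ENNReal.ofReal b⁻¹ * volume B) := by
  have hS : {t : ℝ | t ∈ Set.Ico 0 (M / b) ∧ Int.fract (b * t) ∈ B}
      = ⋃ d ∈ Finset.range M, (fun t : ℝ => b * t) ⁻¹' ((fun u : ℝ => u - d) ⁻¹' B) := by
    ext t
    simp only [Set.mem_ofPred_eq, Set.mem_iUnion, Set.mem_preimage, Finset.mem_range, exists_prop]
    constructor
    · rintro ⟨⟨h0, h1⟩, h2⟩
      have hbt : 0 ≤ b * t := by positivity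
      refine ⟨⌊b * t⌋₊, ?_, ?_⟩
      · rw [Nat.floor_lt hbt]
        rw [lt_div_iff₀ hb] at h1
        linarith
      · rw [natCast_floor_eq_intCast_floor hbt]
        exact h2
    · rintro ⟨d, hd, h⟩
      have h3 := hB1 h
      have hf : Int.fract (b * t) = b * t - d := by
        rw [Int.fract_eq_iff]
        exact ⟨h3.1, h3.2, d, by simp⟩
      have hd' : (d:ℝ) + 1 ≤ M := by exact_mod_cast hd
      refine ⟨⟨?_, ?_⟩, by rw [hf]; exact h⟩
      · have : 0 ≤ b * t := by linarith [h3.1, (Nat.cast_nonneg d : (0:ℝ) ≤ d)]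
        exact nonneg_of_mul_nonneg_right this hb
      · rw [lt_div_iff₀ hb]
        linarith [h3.2]
  rw [hS, measure_biUnion_finset]
  · have : ∀ d ∈ Finset.range M, volume ((fun t : ℝ => b * t) ⁻¹' ((fun u : ℝ => u - d) ⁻¹' B))
        = ENNReal.ofReal b⁻¹ * volume B := by
      intro d _
      have ht : volume ((fun u : ℝ => u - d) ⁻¹' B) = volume B := by
        simp only [sub_eq_add_neg]
        exact measure_preimage_add_right volume _ B
      rw [Real.volume_preimage_mul_left hb.ne', ht, abs_of_pos (inv_pos.2 hb)]
    rw [Finset.sum_congr rfl this]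
    simp
  · intro d _ d' _ hdd
    rw [Function.onFun, Set.disjoint_left]
    intro t ht ht'
    apply hdd
    have h1 := hB1 ht
    have h2 := hB1 ht'
    simp only [Set.mem_Ico] at h1 h2
    have a1 : (d:ℝ) < d' + 1 := by linarith
    have a2 : (d':ℝ) < d + 1 := by linarith
    have a1' : d < d' + 1 := by exact_mod_cast a1
    have a2' : d' < d + 1 := by exact_mod_cast a2
    omega
  · intro d _
    exact ((measurable_id.sub_const _).comp (measurable_const_mul b)) hB

lemma digit_succ (k j : ℕ) (hj : 1 ≤ j) (t : ℝ) :
    digit k (j+1) t = digit k j (Int.fract (2^k * t)) := by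
  unfold digit
  have h : Int.fract (2^k * t) * 2^(k*j) = t * 2^(k*(j+1)) - ((⌊2^k * t⌋ * 2^(k*j) : ℤ) : ℝ) := by
    rw [← Int.self_sub_floor]
    push_cast
    rw [Nat.mul_add, pow_add, mul_one]
    ring
  rw [h, Int.floor_sub_intCast]
  obtain ⟨j, rfl⟩ := Nat.exists_eq_add_of_le' hj
  rw [Nat.mul_add k j 1, mul_one, pow_add, ← mul_assoc, Int.sub_mul_emod_self_right]

lemma digit_one (k : ℕ) (t : ℝ) (h : t ∈ Set.Ico (0:ℝ) 1) : digit k 1 t = ⌊2^k * t⌋ := by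
  unfold digit
  rw [mul_one, mul_comm]
  apply Int.emod_eq_of_lt
  · rw [Int.floor_nonneg]; have := h.1; positivity
  · rw [Int.floor_lt]
    push_cast
    have := h.2
    have h2 : (0:ℝ) < 2^k := by positivity
    nlinarith

/-- membership recursion -/
lemma EE_succ (k m : ℕ) (hk : 1 ≤ k) (hm : 1 ≤ m) (t : ℝ) :
    t ∈ EE k (m+1) ↔ t ∈ Set.Ico (0:ℝ) (1/2) ∧ Int.fract (2^k * t) ∈ EE k m := by
  have h2 : (2:ℝ)^k = 2^(k-1) * 2 := by
    rw [← pow_succ]; congr 1; omega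
  have hp : (0:ℝ) < 2^(k-1) := by positivity
  have key : ∀ t ∈ Set.Ico (0:ℝ) 1, (digit k 1 t < 2^(k-1) ↔ t < 1/2) := by
    intro t ht
    rw [digit_one k t ht, Int.floor_lt, h2]
    push_cast
    constructor
    · intro h; nlinarith
    · intro h; nlinarith
  constructor
  · rintro ⟨h0, h1, h3⟩
    have := (key t h0).1 (h1 1 le_rfl (by omega))
    refine ⟨⟨h0.1, this⟩, ⟨Int.fract_nonneg _, Int.fract_lt_one _⟩, ?_, ?_⟩
    · intro j hj hjm
      rw [← digit_succ k j hj]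
      exact h1 _ (by omega) (by omega)
    · rw [← digit_succ k m hm]; exact h3
  · rintro ⟨h0, h1, h3, h4⟩
    have ht : t ∈ Set.Ico (0:ℝ) 1 := ⟨h0.1, by linarith [h0.2]⟩
    refine ⟨ht, ?_, ?_⟩
    · intro j hj hjm
      obtain ⟨j, rfl⟩ := Nat.exists_eq_add_of_le' hj
      rcases Nat.eq_zero_or_pos j with rfl | hj0
      · exact (key t ht).2 h0.2
      · rw [digit_succ k j hj0]
        exact h3 j hj0 (by omega)
    · rw [digit_succ k m hm]; exact h4

/-- measure of the one-dimensional slice -/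
def ee (k m N : ℕ) : ℝ≥0∞ := volume (EE k m ∩ Set.Ico (0:ℝ) ((2:ℝ)^N)⁻¹)

lemma ofReal_two_pow_inv (k : ℕ) : ENNReal.ofReal ((2:ℝ)^k)⁻¹ = ((2:ℝ≥0∞)^k)⁻¹ := by
  rw [ENNReal.ofReal_inv_of_pos (by positivity), ENNReal.ofReal_pow (by norm_num)]
  simp

lemma two_inv_le_half (N : ℕ) (hN : 1 ≤ N) : ((2:ℝ)^N)⁻¹ ≤ 1/2 := by
  rw [one_div]
  apply inv_anti₀ (by norm_num)
  calc (2:ℝ) = 2^1 := by norm_num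
    _ ≤ 2^N := pow_le_pow_right₀ (by norm_num) hN

lemma ee_add (k m N : ℕ) (hk : 1 ≤ k) (hm : 1 ≤ m) :
    ee k (m+1) (N+k) = ((2:ℝ≥0∞)^k)⁻¹ * ee k m N := by
  have hb : (0:ℝ) < 2^k := by positivity
  have hb1 : (1:ℝ) ≤ 2^k := one_le_pow₀ (by norm_num)
  have hN : (0:ℝ) < 2^N := by positivity
  have hN1 : (1:ℝ) ≤ 2^N := one_le_pow₀ (by norm_num)
  have := vol_fract (2^k) hb 1 (EE k m ∩ Set.Ico (0:ℝ) ((2:ℝ)^N)⁻¹)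
    ((EE_measurable k m).inter measurableSet_Ico) (fun t ht => ht.1.1)
  rw [ofReal_two_pow_inv, Nat.cast_one, Nat.cast_one, one_mul] at this
  unfold ee
  rw [← this]
  congr 1
  ext t
  have hfr : t ∈ Set.Ico (0:ℝ) (1/2^k) → Int.fract (2^k * t) = 2^k * t := by
    rintro ⟨h0, h1⟩
    rw [Int.fract_eq_self]
    rw [lt_div_iff₀ hb] at h1
    exact ⟨by positivity, by linarith⟩
  have hiff : t < (2^(N+k))⁻¹ ↔ 2^k * t < ((2:ℝ)^N)⁻¹ := by
    rw [← one_div, ← one_div, lt_div_iff₀ (by positivity), lt_div_iff₀ hN, pow_add]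
    constructor <;> intro h <;> nlinarith
  have hle : ((2:ℝ)^(N+k))⁻¹ ≤ 1 / 2^k := by
    rw [one_div]
    exact inv_anti₀ hb (pow_le_pow_right₀ (by norm_num) (by omega))
  simp only [Set.mem_inter_iff, Set.mem_ofPred_eq, EE_succ k m hk hm, Nat.cast_one]
  constructor
  · rintro ⟨⟨h1, h2⟩, h3⟩
    have ht : t ∈ Set.Ico (0:ℝ) (1/2^k) := ⟨h3.1, lt_of_lt_of_le h3.2 hle⟩
    refine ⟨ht, h2, ?_⟩
    rw [hfr ht]
    exact ⟨by have := h3.1; positivity, hiff.1 h3.2⟩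
  · rintro ⟨ht, h2, h3⟩
    rw [hfr ht] at h3
    have h4 := hiff.2 h3.2
    exact ⟨⟨⟨ht.1, h4.trans_le (two_inv_le_half _ (by omega))⟩, h2⟩, ht.1, h4⟩

lemma ee_small (k m s : ℕ) (hk : 1 ≤ k) (hm : 1 ≤ m) (hs : 1 ≤ s) (hsk : s ≤ k) :
    ee k (m+1) s = ((2:ℝ≥0∞)^s)⁻¹ * ee k m 0 := by
  have hb : (0:ℝ) < 2^k := by positivity
  have h0 : ee k m 0 = volume (EE k m) := by
    unfold ee
    congr 1
    apply Set.inter_eq_left.2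
    intro t ht
    simpa using ht.1
  have := vol_fract (2^k) hb (2^(k-s)) (EE k m) (EE_measurable k m) (fun t ht => ht.1)
  have hc : ((2^(k-s) : ℕ) : ℝ) / 2^k = ((2:ℝ)^s)⁻¹ := by
    have : (2:ℝ)^k = 2^(k-s) * 2^s := by rw [← pow_add]; congr 1; omega
    rw [this]; push_cast; field_simp
  have hc' : ((2^(k-s) : ℕ) : ℝ≥0∞) * (2^k)⁻¹ = ((2:ℝ≥0∞)^s)⁻¹ := by
    have h1 : (2:ℝ≥0∞)^k = 2^(k-s) * 2^s := by rw [← pow_add]; congr 1; omega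
    rw [h1, ENNReal.mul_inv (by simp) (by simp), ← mul_assoc]
    push_cast
    rw [ENNReal.mul_inv_cancel (by simp) (by simp), one_mul]
  rw [hc, ofReal_two_pow_inv, ← mul_assoc, hc'] at this
  rw [h0, ← this]
  unfold ee
  congr 1
  ext t
  simp only [Set.mem_inter_iff, Set.mem_ofPred_eq, EE_succ k m hk hm]
  constructor
  · rintro ⟨⟨h1, h2⟩, h3⟩
    exact ⟨h3, h2⟩
  · rintro ⟨h3, h2⟩
    exact ⟨⟨⟨h3.1, h3.2.trans_le (two_inv_le_half _ hs)⟩, h2⟩, h3⟩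

lemma ee_zero (k m : ℕ) (hk : 1 ≤ k) (hm : 1 ≤ m) :
    ee k (m+1) 0 = (2:ℝ≥0∞)⁻¹ * ee k m 0 := by
  have := ee_small k m 1 hk hm le_rfl hk
  rw [pow_one] at this
  rw [← this]
  unfold ee
  congr 1
  ext t
  simp only [Set.mem_inter_iff, EE_succ k m hk hm, pow_zero, pow_one, ← one_div]
  constructor
  · rintro ⟨h1, _⟩; exact ⟨h1, h1.1⟩
  · rintro ⟨h1, h2⟩; exact ⟨h1, h2.1, by linarith [h2.2]⟩

lemma EE_one (k : ℕ) (hk : 1 ≤ k) :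
    EE k 1 = Set.Ico (1/2 : ℝ) (1/2 + (2^k)⁻¹) := by
  have h2 : (2:ℝ)^k = 2^(k-1) * 2 := by
    rw [← pow_succ]; congr 1; omega
  have hb : (0:ℝ) < 2^k := by positivity
  have hle := two_inv_le_half k hk
  have hinv : (2:ℝ)^k * (2^k)⁻¹ = 1 := mul_inv_cancel₀ hb.ne'
  ext t
  have key : t ∈ Set.Ico (0:ℝ) 1 → (digit k 1 t = 2^(k-1) ↔ t ∈ Set.Ico (1/2 : ℝ) (1/2 + (2^k)⁻¹)) := by
    intro ht
    rw [digit_one k t ht, Int.floor_eq_iff]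
    push_cast
    constructor
    · rintro ⟨h1, h3⟩
      constructor
      · by_contra h; push Not at h; nlinarith
      · by_contra h; push Not at h; nlinarith
    · rintro ⟨h1, h3⟩
      constructor <;> nlinarith
  constructor
  · rintro ⟨h1, _, h3⟩
    exact (key h1).1 h3
  · intro h
    have ht : t ∈ Set.Ico (0:ℝ) 1 := ⟨by linarith [h.1], by linarith [h.2]⟩
    exact ⟨ht, fun j h1 h3 => by omega, (key ht).2 h⟩

lemma ee_one_zero (k : ℕ) (hk : 1 ≤ k) : ee k 1 0 = ((2:ℝ≥0∞)^k)⁻¹ := by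
  have hle := two_inv_le_half k hk
  unfold ee
  rw [EE_one k hk, Set.inter_eq_left.2, Real.volume_Ico, add_sub_cancel_left, ofReal_two_pow_inv]
  intro t ht
  exact ⟨by linarith [ht.1], by simp; linarith [ht.2]⟩

lemma ee_one_pos (k N : ℕ) (hk : 1 ≤ k) (hN : 1 ≤ N) : ee k 1 N = 0 := by
  have hle := two_inv_le_half N hN
  unfold ee
  rw [EE_one k hk]
  convert measure_empty (μ := (volume : Measure ℝ))
  ext t
  simp only [Set.mem_inter_iff, Set.mem_Ico, Set.mem_empty_iff_false, iff_false]
  rintro ⟨⟨h1, _⟩, _, h2⟩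
  linarith

lemma ee_closed (k m : ℕ) (hk : 1 ≤ k) : ee k (m+1) 0 = ((2:ℝ≥0∞)^k)⁻¹ * (2⁻¹)^m := by
  induction m with
  | zero => simp [ee_one_zero k hk]
  | succ m ih => rw [ee_zero k (m+1) hk (by omega), ih, pow_succ]; ring

/-- the ratio -/
def cc (n k : ℕ) : ℝ≥0∞ := (2:ℝ≥0∞)^(k*n) / ((2:ℝ≥0∞)^((k-1)*n) + 1)

def JJ (n k N : ℕ) : ℝ≥0∞ := ∑' m : ℕ, cc n k ^ (m+1) * ee k (m+1) N ^ n

lemma sCube_zero (n N : ℕ) :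
    sCube n 0 N = Set.univ.pi fun _ => Set.Ico (0:ℝ) ((2:ℝ)^N)⁻¹ := by
  simp [sCube, Cube]

lemma vol_sCube_zero (n N : ℕ) : (volume (sCube n 0 N))⁻¹ = (2:ℝ≥0∞)^(N*n) := by
  rw [sCube_zero, Real.volume_pi_Ico]
  simp only [sub_zero, ofReal_two_pow_inv, Finset.prod_const, Finset.card_univ, Fintype.card_fin]
  rw [← ENNReal.inv_pow, inv_inv, pow_mul]

lemma wk_lint_eq (n k N : ℕ) : ∫⁻ y in sCube n 0 N, wk n k y = JJ n k N := by
  have hO : ∀ m, MeasurableSet (Omega n k m) := by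
    intro m
    rw [Omega_eq]
    exact MeasurableSet.univ_pi fun _ => EE_measurable k m
  unfold wk
  rw [lintegral_tsum]
  · unfold JJ
    congr 1
    ext m
    rw [lintegral_indicator (hO _), setLIntegral_const, Measure.restrict_apply (hO _), Omega_eq,
      sCube_zero, ← Set.pi_inter_distrib, volume_pi_pi]
    simp [ee, cc]
  · intro m
    exact (measurable_const.indicator (hO _)).aemeasurable

lemma cc_mul (n k : ℕ) : cc n k * ((2:ℝ≥0∞)^(k*n))⁻¹ = ((2:ℝ≥0∞)^((k-1)*n) + 1)⁻¹ := by
  unfold cc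
  rw [div_eq_mul_inv, mul_right_comm, ENNReal.mul_inv_cancel (by simp) (by simp), one_mul]

lemma JJ_zero (n k : ℕ) (hk : 1 ≤ k) : JJ n k 0 = 1 := by
  unfold JJ
  set p : ℝ≥0∞ := (2:ℝ≥0∞)^((k-1)*n) with hp
  have hpt : p ≠ ∞ := by simp [hp]
  have hc := cc_mul n k
  rw [← hp] at hc
  have hc2 : cc n k * (2⁻¹)^n = p / (p+1) := by
    have h1 : (2:ℝ≥0∞)^(k*n) = p * 2^n := by
      rw [hp, ← pow_add]; congr 1
      obtain ⟨k, rfl⟩ := Nat.exists_eq_add_of_le' hk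
      simp; ring
    unfold cc
    rw [← hp, h1, div_eq_mul_inv, div_eq_mul_inv, mul_right_comm, mul_assoc p,
      ← ENNReal.inv_pow, ENNReal.mul_inv_cancel (by simp) (by simp), mul_one]
  have : ∀ m : ℕ, cc n k ^ (m+1) * ee k (m+1) 0 ^ n = (p+1)⁻¹ * (p/(p+1))^m := by
    intro m
    rw [ee_closed k m hk, ← hc, ← hc2, mul_pow, mul_pow, ← ENNReal.inv_pow, ← pow_mul, ← pow_mul,
      ← pow_mul, mul_comm m n, pow_succ]
    ring
  simp_rw [this]
  rw [ENNReal.tsum_mul_left, ENNReal.tsum_geometric]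
  have h1 : 1 - p/(p+1) = (p+1)⁻¹ := by
    apply ENNReal.sub_eq_of_eq_add
    · exact ENNReal.div_ne_top hpt (by simp)
    · rw [div_eq_mul_inv, add_comm, ← add_one_mul, ENNReal.mul_inv_cancel (by simp) (by simp [hpt])]
  rw [h1, inv_inv, ENNReal.inv_mul_cancel (by simp) (by simp [hpt])]

lemma JJ_step (n k N a N' : ℕ) (hn : 1 ≤ n) (hk : 1 ≤ k) (hN : 1 ≤ N)
    (h : ∀ m, 1 ≤ m → ee k (m+1) N = ((2:ℝ≥0∞)^a)⁻¹ * ee k m N') :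
    JJ n k N = cc n k * ((2:ℝ≥0∞)^(a*n))⁻¹ * JJ n k N' := by
  unfold JJ
  rw [tsum_eq_zero_add' ENNReal.summable, ee_one_pos k N hk hN, zero_pow (by omega), mul_zero, zero_add,
    ← ENNReal.tsum_mul_left]
  congr 1
  ext m
  rw [h (m+1) (by omega), mul_pow, ← ENNReal.inv_pow, ← pow_mul]
  ring

lemma two_cancel (a : ℕ) : (2:ℝ≥0∞)^a * ((2:ℝ≥0∞)^a)⁻¹ = 1 :=
  ENNReal.mul_inv_cancel (by simp) (by simp)

lemma avg_eq (n k i s : ℕ) (hn : 1 ≤ n) (hk : 1 ≤ k) (hs : s < k) :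
    (2:ℝ≥0∞)^((k*i+s+1)*n) * JJ n k (k*i+s+1) = cc n k ^ (i+1) := by
  induction i with
  | zero =>
    rw [JJ_step n k (k*0+s+1) (s+1) 0 hn hk (by omega), JJ_zero n k hk]
    · simp only [mul_zero, zero_add, mul_one, pow_one]
      rw [mul_left_comm, two_cancel, mul_one]
    · intro m hm
      simpa using ee_small k m (s+1) hk hm (by omega) (by omega)
  | succ i ih =>
    have e : k*(i+1)+s+1 = (k*i+s+1) + k := by ring
    rw [e, JJ_step n k (k*i+s+1+k) k (k*i+s+1) hn hk (by omega)
      (fun m hm => ee_add k m _ hk hm), add_mul, pow_add, pow_succ _ (i+1), ← ih]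
    calc _ = (2:ℝ≥0∞)^((k*i+s+1)*n) * JJ n k (k*i+s+1) * cc n k
          * (2^(k*n) * ((2:ℝ≥0∞)^(k*n))⁻¹) := by ring
      _ = _ := by rw [two_cancel, mul_one]

lemma sum_blocks (n k M : ℕ) (hn : 1 ≤ n) (hk : 1 ≤ k) :
    ∑ N ∈ Finset.range (k*M), (2:ℝ≥0∞)^((N+1)*n) * JJ n k (N+1)
      = k * ∑ i ∈ Finset.range M, cc n k ^ (i+1) := by
  induction M with
  | zero => simp
  | succ M ih =>
    rw [Nat.mul_add, mul_one, Finset.sum_range_add, ih, Finset.sum_range_succ, mul_add]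
    congr 1
    rw [Finset.sum_congr rfl (fun s hs => avg_eq n k M s hn hk (Finset.mem_range.1 hs))]
    simp

/-- For `n ≥ 1`, `k ≥ 1`, every `m ≥ 1` and every `x ∈ Q_1^m(k)`:
`T_S(w_k)(x) = 1 + k Σ_{i=1}^{m-1} (2^{kn}/(2^{(k-1)n}+1))^i`. -/
theorem sparse_wk_exact_formula (n k : ℕ) (hn : 1 ≤ n) (hk : 1 ≤ k)
    (m : ℕ) (hm : 1 ≤ m) (x : Fin n → ℝ) (hx : x ∈ Q1 n k m) :
    TS (wk n k) x
      = 1 + (k : ℝ≥0∞) *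
          ∑ i ∈ Finset.range (m-1),
            ((2:ℝ≥0∞)^(k*n) / ((2:ℝ≥0∞)^((k-1)*n) + 1))^(i+1) := by
  obtain ⟨M, rfl⟩ := Nat.exists_eq_add_of_le' hm
  rw [Nat.add_sub_cancel]
  change _ = 1 + (k : ℝ≥0∞) * ∑ i ∈ Finset.range M, cc n k ^ (i+1)
  have hxi : ∀ i, ((2:ℝ)^(k*M+1))⁻¹ ≤ x i ∧ x i < ((2:ℝ)^(k*M))⁻¹ := by
    intro i
    have h := hx i (Set.mem_univ i)
    have e1 : (2:ℝ)^(-((k:ℤ)*(((M+1:ℕ):ℤ)-1)) - 1) = ((2:ℝ)^(k*M+1))⁻¹ := by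
      rw [← zpow_natCast, ← zpow_neg]; congr 1; push_cast; ring
    have e2 : (2:ℝ)^(-((k:ℤ)*((M+1:ℕ):ℤ))) = ((2:ℝ)^(k*(M+1)))⁻¹ := by
      rw [← zpow_natCast, ← zpow_neg]; congr 1
    simp only [e1, e2] at h
    refine ⟨h.1, h.2.trans_le ?_⟩
    have h3 : ((2:ℝ)^(k*(M+1)))⁻¹ ≤ ((2:ℝ)^(k*M+1))⁻¹ :=
      inv_anti₀ (by positivity) (pow_le_pow_right₀ (by norm_num) (by rw [Nat.mul_add]; omega))
    have h4 : ((2:ℝ)^(k*M+1))⁻¹ + ((2:ℝ)^(k*M+1))⁻¹ = ((2:ℝ)^(k*M))⁻¹ := by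
      rw [pow_succ]; field_simp; norm_num
    linarith
  have hmem0 : ∀ N, x ∈ sCube n 0 N ↔ N < k*M+1 := by
    intro N
    rw [sCube_zero, Set.mem_univ_pi]
    constructor
    · intro h
      have h1 := (hxi ⟨0, hn⟩).1.trans_lt (h ⟨0, hn⟩).2
      have h2 := (inv_lt_inv₀ (by positivity) (by positivity)).1 h1
      exact (pow_lt_pow_iff_right₀ (by norm_num)).1 h2
    · intro h i
      refine ⟨le_trans (by positivity) (hxi i).1, (hxi i).2.trans_le ?_⟩
      exact inv_anti₀ (by positivity) (pow_le_pow_right₀ (by norm_num) (by omega))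
  have hmem1 : ∀ l N, l ≠ 0 → x ∉ sCube n l N := by
    intro l N hl h
    have h1 := (h ⟨0, hn⟩ (Set.mem_univ _)).1
    simp only [hl, if_false] at h1
    have h2 := (hxi ⟨0, hn⟩).2
    have h3 : (1:ℝ) ≤ 2^l := one_le_pow₀ (by norm_num)
    have h4 : ((2:ℝ)^(k*M))⁻¹ ≤ 1 := inv_le_one_of_one_le₀ (one_le_pow₀ (by norm_num))
    linarith
  unfold TS
  rw [ENNReal.tsum_prod', tsum_eq_single 0]
  · rw [tsum_eq_sum (s := Finset.range (k*M+1))]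
    · have : ∀ N ∈ Finset.range (k*M+1), (sCube n 0 N).indicator
          (fun _ => (volume (sCube n 0 N))⁻¹ * ∫⁻ y in sCube n 0 N, wk n k y) x
          = (2:ℝ≥0∞)^(N*n) * JJ n k N := by
        intro N hN
        rw [Set.indicator_of_mem ((hmem0 N).2 (Finset.mem_range.1 hN)), vol_sCube_zero, wk_lint_eq]
      rw [Finset.sum_congr rfl this, Finset.sum_range_succ', sum_blocks n k M hn hk, JJ_zero n k hk]
      simp [add_comm]
    · intro N hN
      apply Set.indicator_of_notMem
      rw [hmem0]
      simpa using hN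
  · intro l hl
    rw [ENNReal.tsum_eq_zero]
    intro N
    exact Set.indicator_of_notMem (hmem1 l N hl) _
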